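/- arXiv:2409.18831 — 3 statements merged into one kernel-verified Lean document; each statement's English description precedes it below -/
import Mathlib

section
/- Let δ > 0 and let x ∈ M satisfy ‖x‖ ≤ 1, ‖x − x*‖₂ ≤ δ, and ‖x − x²‖₂ ≤ δ. Then, setting z := x*x, one has ‖x − z‖₂ ≤ 2δ and ‖z² − z‖₂ ≤ 3δ. -/
/-!
The 2-norm of a positive functional is a seminorm (Cauchy-Schwarz), left multiplication by a
contraction does not increase it, and traciality gives the same for right multiplication.
The bounds are then read off from the decompositions
`x - x*x = (x - x²) + (x - x*) x` and
`z² - z = x* ((x² - x) + x (x² - x) + x (x* - x) x)`, where `z = x*x`.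
-/

open scoped ComplexOrder

/-- The tracial 2-norm `‖x‖₂ = (τ(x*x))^{1/2}` associated to a linear functional `τ`. -/
noncomputable def tnorm {M : Type*} [Ring M] [StarRing M] [Algebra ℂ M]
    (τ : M →ₗ[ℂ] ℂ) (x : M) : ℝ :=
  Real.sqrt (τ (star x * x)).re

/-- Cauchy-Schwarz, obtained from the discriminant of `t ↦ τ((a + t b)*(a + t b)) ≥ 0`,
yields the triangle inequality. -/
lemma tnorm_add_le {M : Type*} [CStarAlgebra M] (τ : M →ₗ[ℂ] ℂ)
    (hτpos : ∀ x : M, 0 ≤ τ (star x * x)) (a b : M) :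
    tnorm τ (a + b) ≤ tnorm τ a + tnorm τ b := by
  have hre : ∀ y : M, 0 ≤ (τ (star y * y)).re := fun y => (Complex.le_def.1 (hτpos y)).1
  have expand : ∀ t : ℝ, (τ (star (a + (t : ℂ) • b) * (a + (t : ℂ) • b))).re =
      (τ (star b * b)).re * (t * t) + (τ (star a * b + star b * a)).re * t
        + (τ (star a * a)).re := by
    intro t
    have : star (a + (t : ℂ) • b) * (a + (t : ℂ) • b) =
        star a * a + (t : ℂ) • (star a * b + star b * a) + (t : ℂ) • (t : ℂ) • (star b * b) := by
      simp only [star_add, star_smul, Complex.star_def, Complex.conj_ofReal, add_mul, mul_add,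
        smul_mul_assoc, mul_smul_comm, smul_add]
      abel
    rw [this]
    simp only [map_add, map_smul, smul_eq_mul, Complex.add_re, Complex.re_ofReal_mul]
    ring
  have hd := discrim_le_zero (fun t => (expand t).symm ▸ hre _)
  have h1 := expand 1
  simp only [Complex.ofReal_one, one_smul] at h1
  unfold tnorm
  have hA := hre a
  have hB := hre b
  rw [h1]
  generalize (τ (star a * a)).re = A at *
  generalize (τ (star b * b)).re = B at *
  generalize (τ (star a * b + star b * a)).re = R at *
  apply Real.sqrt_le_iff.2 ⟨by positivity, ?_⟩
  have hR : R ≤ 2 * (√A * √B) := by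
    refine (abs_le.1 (abs_le_of_sq_le_sq ?_ (by positivity))).2
    rw [mul_pow, mul_pow, Real.sq_sqrt hA, Real.sq_sqrt hB]
    unfold discrim at hd
    linarith
  nlinarith [Real.sq_sqrt hA, Real.sq_sqrt hB]

/-- `1 - c*c` has the form `d*d` when `‖c‖ ≤ 1`, so `‖b‖₂² - ‖c b‖₂² = ‖d b‖₂² ≥ 0`. -/
lemma tnorm_mul_le_left {M : Type*} [CStarAlgebra M] (τ : M →ₗ[ℂ] ℂ)
    (hτpos : ∀ x : M, 0 ≤ τ (star x * x)) (c b : M) (hc : ‖c‖ ≤ 1) :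
    tnorm τ (c * b) ≤ tnorm τ b := by
  let := CStarAlgebra.spectralOrder M
  let := CStarAlgebra.spectralOrderedRing M
  have hle : star c * c ≤ 1 := by
    refine (CStarAlgebra.norm_le_one_iff_of_nonneg _ (star_mul_self_nonneg c)).1 ?_
    rw [CStarRing.norm_star_mul_self]
    nlinarith [norm_nonneg c]
  obtain ⟨d, hd⟩ := CStarAlgebra.nonneg_iff_eq_star_mul_self.1 (sub_nonneg.2 hle)
  have key : star b * b = star (c * b) * (c * b) + star (d * b) * (d * b) := by
    have : star (d * b) * (d * b) = star b * (star d * d) * b := by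
      simp only [star_mul, mul_assoc]
    rw [this, ← hd]
    simp only [star_mul, mul_assoc, mul_sub, sub_mul, mul_one, one_mul]
    abel
  apply Real.sqrt_le_sqrt
  rw [key, map_add, Complex.add_re]
  linarith [(Complex.le_def.1 (hτpos (d * b))).1, Complex.zero_re]

lemma tnorm_star {M : Type*} [CStarAlgebra M] (τ : M →ₗ[ℂ] ℂ)
    (hτtr : ∀ x y : M, τ (x * y) = τ (y * x)) (b : M) : tnorm τ (star b) = tnorm τ b := by
  unfold tnorm
  rw [hτtr, star_star]

lemma tnorm_neg {M : Type*} [CStarAlgebra M] (τ : M →ₗ[ℂ] ℂ) (b : M) :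
    tnorm τ (-b) = tnorm τ b := by
  simp [tnorm]

lemma tnorm_mul_le_right {M : Type*} [CStarAlgebra M] (τ : M →ₗ[ℂ] ℂ)
    (hτpos : ∀ x : M, 0 ≤ τ (star x * x)) (hτtr : ∀ x y : M, τ (x * y) = τ (y * x))
    (b c : M) (hc : ‖c‖ ≤ 1) : tnorm τ (b * c) ≤ tnorm τ b := by
  rw [← tnorm_star τ hτtr (b * c), ← tnorm_star τ hτtr b, star_mul]
  exact tnorm_mul_le_left τ hτpos _ _ (by rwa [norm_star])

theorem stmt1 {M : Type*} [CStarAlgebra M]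
    (τ : M →ₗ[ℂ] ℂ) (hτ1 : τ 1 = 1)
    (hτpos : ∀ x : M, 0 ≤ τ (star x * x))
    (hτtr : ∀ x y : M, τ (x * y) = τ (y * x))
    (δ : ℝ) (hδ : 0 < δ) (x : M) (hx : ‖x‖ ≤ 1)
    (h1 : tnorm τ (x - star x) ≤ δ) (h2 : tnorm τ (x - x ^ 2) ≤ δ) :
    tnorm τ (x - star x * x) ≤ 2 * δ ∧
      tnorm τ ((star x * x) ^ 2 - star x * x) ≤ 3 * δ := by
  have hs : ‖star x‖ ≤ 1 := by rwa [norm_star]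
  have h2' : tnorm τ (x ^ 2 - x) ≤ δ := by rwa [← neg_sub, tnorm_neg]
  have h1' : tnorm τ (star x - x) ≤ δ := by rwa [← neg_sub, tnorm_neg]
  constructor
  · have e : x - star x * x = (x - x ^ 2) + (x - star x) * x := by noncomm_ring
    rw [e]
    linarith [tnorm_add_le τ hτpos (x - x ^ 2) ((x - star x) * x),
      tnorm_mul_le_right τ hτpos hτtr (x - star x) x hx]
  · have e : (star x * x) ^ 2 - star x * x =
        star x * ((x ^ 2 - x) + (x * (x ^ 2 - x) + x * ((star x - x) * x))) := by noncomm_ring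
    rw [e]
    linarith [tnorm_mul_le_left τ hτpos (star x)
        ((x ^ 2 - x) + (x * (x ^ 2 - x) + x * ((star x - x) * x))) hs,
      tnorm_add_le τ hτpos (x ^ 2 - x) (x * (x ^ 2 - x) + x * ((star x - x) * x)),
      tnorm_add_le τ hτpos (x * (x ^ 2 - x)) (x * ((star x - x) * x)),
      tnorm_mul_le_left τ hτpos x (x ^ 2 - x) hx,
      tnorm_mul_le_left τ hτpos x ((star x - x) * x) hx,
      tnorm_mul_le_right τ hτpos hτtr (star x - x) x hx]
end

section
/- Let p, q ∈ M be projections, let 0 < δ < 1, and let x ∈ M satisfy ‖x‖ ≤ 1, ‖x*x − p‖₂ ≤ δ, and ‖xx* − q‖₂ ≤ δ. Then, setting y := qxp, one has ‖y*y − p‖₂ ≤ 5δ^{1/2}. -/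
/-!
Write `a = x*x`. Since `p` is a projection, `y*y - p = p (x*qx - p) p`, and
`x*qx - p = x*(q - xx*)x + a(a - p) + (a - p)p`.
Multiplication by contractions, on either side, does not increase the 2-norm, so each of the three
summands has 2-norm at most `δ`, and hence `‖y*y - p‖₂ ≤ 3δ ≤ 5√δ`.

For three vectors, `‖u + v + w‖₂² ≤ 3(‖u‖₂² + ‖v‖₂² + ‖w‖₂²)` is as good as the triangle inequality
when all three have the same bound; it follows from an identity of parallelogram type, without
the Cauchy–Schwarz inequality.
-/

open scoped ComplexOrder

section TracialNorm

variable {M : Type*} [CStarAlgebra M] (τ : M →ₗ[ℂ] ℂ)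

/-- The difference of the two sides is `‖u - v‖₂² + ‖v - w‖₂² + ‖u - w‖₂²`. -/
lemma trace_sq_add_three_le (hτpos : ∀ x : M, 0 ≤ τ (star x * x)) (u v w : M) :
    (τ (star (u + v + w) * (u + v + w))).re ≤
      3 * ((τ (star u * u)).re + (τ (star v * v)).re + (τ (star w * w)).re) := by
  have h1 := (Complex.le_def.1 (hτpos (u - v))).1
  have h2 := (Complex.le_def.1 (hτpos (v - w))).1
  have h3 := (Complex.le_def.1 (hτpos (u - w))).1
  simp only [star_sub, star_add, sub_mul, mul_sub, add_mul, mul_add, map_sub, map_add,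
    Complex.sub_re, Complex.add_re, Complex.zero_re] at *
  linarith

/-- Left multiplication by a contraction: `1 - a*a = c*c` for some `c`, and the difference of the
two sides is `‖cb‖₂²`. -/
lemma trace_sq_mul_le_right (hτpos : ∀ x : M, 0 ≤ τ (star x * x)) (a b : M) (ha : ‖a‖ ≤ 1) :
    (τ (star (a * b) * (a * b))).re ≤ (τ (star b * b)).re := by
  let _ := CStarAlgebra.spectralOrder M
  have := CStarAlgebra.spectralOrderedRing M
  have h : star a * a ≤ 1 := by
    rw [← CStarAlgebra.norm_le_one_iff_of_nonneg _ (star_mul_self_nonneg a),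
      CStarRing.norm_star_mul_self]
    exact mul_le_one₀ ha (norm_nonneg _) ha
  obtain ⟨c, hc⟩ := CStarAlgebra.nonneg_iff_eq_star_mul_self.1 (sub_nonneg.2 h)
  have h1 := (Complex.le_def.1 (hτpos (c * b))).1
  have h2 : star (c * b) * (c * b) = star b * b - star (a * b) * (a * b) := by
    calc star (c * b) * (c * b) = star b * (star c * c) * b := by
          simp only [star_mul, mul_assoc]
      _ = _ := by
          rw [← hc]
          simp only [star_mul, mul_sub, sub_mul, mul_one, mul_assoc]
  rw [h2, map_sub, Complex.sub_re, Complex.zero_re] at h1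
  linarith

/-- Right multiplication by a contraction: the trace property gives `‖z*‖₂ = ‖z‖₂`, which reduces
this to left multiplication. -/
lemma trace_sq_mul_le_left (hτpos : ∀ x : M, 0 ≤ τ (star x * x))
    (hτtr : ∀ x y : M, τ (x * y) = τ (y * x)) (a b : M) (hb : ‖b‖ ≤ 1) :
    (τ (star (a * b) * (a * b))).re ≤ (τ (star a * a)).re := by
  have h := trace_sq_mul_le_right τ hτpos (star b) (star a) (by rwa [norm_star])
  rw [← star_mul, star_star, star_star, hτtr, hτtr a] at h
  exact h

end TracialNorm

theorem stmt5 {M : Type*} [CStarAlgebra M]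
    (τ : M →ₗ[ℂ] ℂ) (hτ1 : τ 1 = 1)
    (hτpos : ∀ x : M, 0 ≤ τ (star x * x))
    (hτtr : ∀ x y : M, τ (x * y) = τ (y * x))
    (p q : M) (hp1 : star p = p) (hp2 : p * p = p) (hq1 : star q = q) (hq2 : q * q = q)
    (δ : ℝ) (hδ0 : 0 < δ) (hδ1 : δ < 1)
    (x : M) (hx : ‖x‖ ≤ 1)
    (h1 : tnorm τ (star x * x - p) ≤ δ) (h2 : tnorm τ (x * star x - q) ≤ δ) :
    tnorm τ (star (q * x * p) * (q * x * p) - p) ≤ 5 * Real.sqrt δ := by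
  have hp : ‖p‖ ≤ 1 := by
    have h : ‖p‖ = ‖p‖ * ‖p‖ := by
      rw [← CStarRing.norm_star_mul_self, hp1, hp2]
    nlinarith [norm_nonneg p]
  have hx' : ‖star x‖ ≤ 1 := by rwa [norm_star]
  have ha : ‖star x * x‖ ≤ 1 := by
    rw [CStarRing.norm_star_mul_self]
    exact mul_le_one₀ hx (norm_nonneg _) hx
  unfold tnorm at *
  rw [Real.sqrt_le_left hδ0.le] at h1 h2
  -- `y*y - p = p z p`, where `z = x*qx - p` is written as a sum of three terms.
  have key : star (q * x * p) * (q * x * p) - p =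
      p * (-(star x * (x * star x - q) * x) + star x * x * (star x * x - p)
        + (star x * x - p) * p) * p := by
    have e : -(star x * (x * star x - q) * x) + star x * x * (star x * x - p)
        + (star x * x - p) * p = star x * q * x - p := by
      rw [sub_mul, hp2]
      noncomm_ring
    rw [e, mul_sub, sub_mul, hp2, hp2]
    congr 1
    calc star (q * x * p) * (q * x * p) = p * (star x * ((q * q) * (x * p))) := by
          simp only [star_mul, hp1, hq1, mul_assoc]
      _ = _ := by simp only [hq2, mul_assoc]
  have b1 := (trace_sq_mul_le_left τ hτpos hτtr (star x * (x * star x - q)) x hx).trans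
    (trace_sq_mul_le_right τ hτpos (star x) (x * star x - q) hx')
  rw [← neg_mul_neg, ← star_neg] at b1
  have b2 := trace_sq_mul_le_right τ hτpos (star x * x) (star x * x - p) ha
  have b3 := trace_sq_mul_le_left τ hτpos hτtr (star x * x - p) p hp
  have b4 := trace_sq_add_three_le τ hτpos (-(star x * (x * star x - q) * x))
    (star x * x * (star x * x - p)) ((star x * x - p) * p)
  rw [key]
  calc _ ≤ 3 * δ := by
        rw [Real.sqrt_le_left (by positivity)]
        refine (trace_sq_mul_le_left τ hτpos hτtr _ p hp).trans
          ((trace_sq_mul_le_right τ hτpos p _ hp).trans (b4.trans ?_))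
        linarith
    _ ≤ 5 * Real.sqrt δ := by
        -- `δ ≤ √δ` because `δ < 1`.
        nlinarith [Real.sqrt_nonneg δ, Real.sq_sqrt hδ0.le, Real.sqrt_le_one.2 hδ1.le]
end

section
/- Let p, q ∈ M be projections and let x ∈ M satisfy ‖x‖ ≤ 1. Then, setting y := qxp, one has (y*y)p = y*y and ‖(y*y)² − y*y‖₂ ≤ ‖y*y − p‖₂. -/
/-!
Write `a = y*y` with `y = qxp`. Since `y p = y`, one has `a p = a`, so `a² - a = a (a - p)`.
As `‖a‖ ≤ 1`, the bound is the contractivity of left multiplication by `a` in the 2-norm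
(`tnorm_mul_le`), which holds because `1 - a*a ≥ 0` has the form `c*c`.
-/

open scoped ComplexOrder

/-- Left multiplication by a contraction `a` does not increase the 2-norm: with `1 - a*a = c*c`,
`τ(d*d) - τ((ad)*(ad)) = τ((cd)*(cd)) ≥ 0`. -/
lemma tnorm_mul_le {M : Type*} [CStarAlgebra M] (τ : M →ₗ[ℂ] ℂ)
    (hτpos : ∀ x : M, 0 ≤ τ (star x * x)) (a d : M) (ha : ‖a‖ ≤ 1) :
    tnorm τ (a * d) ≤ tnorm τ d := by
  let _ := CStarAlgebra.spectralOrder M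
  let _ := CStarAlgebra.spectralOrderedRing M
  have h1 : star a * a ≤ 1 := by
    rw [← CStarAlgebra.norm_le_one_iff_of_nonneg _ (star_mul_self_nonneg a),
      CStarRing.norm_star_mul_self]
    exact mul_le_one₀ ha (norm_nonneg _) ha
  obtain ⟨c, hc⟩ := CStarAlgebra.nonneg_iff_eq_star_mul_self.mp (sub_nonneg.mpr h1)
  have h2 : star d * d - star (a * d) * (a * d) = star (c * d) * (c * d) := by
    calc _ = star d * (1 - star a * a) * d := by rw [star_mul]; noncomm_ring
      _ = _ := by rw [hc, star_mul]; noncomm_ring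
  have h3 := hτpos (c * d)
  rw [← h2, map_sub] at h3
  have h4 := (Complex.le_def.mp h3).1
  rw [Complex.zero_re, Complex.sub_re] at h4
  exact Real.sqrt_le_sqrt (by linarith)

lemma norm_le_one_of_projection {M : Type*} [CStarAlgebra M] (p : M) (hp1 : star p = p)
    (hp2 : p * p = p) : ‖p‖ ≤ 1 := by
  have h := CStarRing.norm_star_mul_self (x := p)
  rw [hp1, hp2] at h
  nlinarith [norm_nonneg p]

theorem stmt6 {M : Type*} [CStarAlgebra M]
    (τ : M →ₗ[ℂ] ℂ) (hτ1 : τ 1 = 1)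
    (hτpos : ∀ x : M, 0 ≤ τ (star x * x))
    (hτtr : ∀ x y : M, τ (x * y) = τ (y * x))
    (p q : M) (hp1 : star p = p) (hp2 : p * p = p) (hq1 : star q = q) (hq2 : q * q = q)
    (x : M) (hx : ‖x‖ ≤ 1) :
    (star (q * x * p) * (q * x * p)) * p = star (q * x * p) * (q * x * p) ∧
      tnorm τ ((star (q * x * p) * (q * x * p)) ^ 2 - star (q * x * p) * (q * x * p)) ≤
        tnorm τ (star (q * x * p) * (q * x * p) - p) := by
  have hy : ‖q * x * p‖ ≤ 1 :=
    (norm_mul_le _ _).trans <| mul_le_one₀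
      ((norm_mul_le _ _).trans <|
        mul_le_one₀ (norm_le_one_of_projection q hq1 hq2) (norm_nonneg _) hx)
      (norm_nonneg _) (norm_le_one_of_projection p hp1 hp2)
  have hyp : q * x * p * p = q * x * p := by rw [mul_assoc, hp2]
  generalize q * x * p = y at hy hyp ⊢
  have hap : star y * y * p = star y * y := by rw [mul_assoc, hyp]
  have ha : ‖star y * y‖ ≤ 1 := by
    rw [CStarRing.norm_star_mul_self]
    exact mul_le_one₀ hy (norm_nonneg _) hy
  refine ⟨hap, ?_⟩
  have h := tnorm_mul_le τ hτpos (star y * y) (star y * y - p) ha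
  rwa [mul_sub, hap, ← sq] at h
end
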